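/- arXiv:1503.06715 — 2 statements merged into one kernel-verified Lean document; each statement's English description precedes it below -/
import Mathlib

section
/- Let Σ = {(s,t) : s ∈ ℝ, t ≥ 0}. Suppose f ∈ L¹_loc(Σ) with distributional derivative ∂_t f ∈ L¹_loc(Σ). Then the trace f(·,0) is well defined as an element of L¹_loc(ℝ) via (f(·,0), φ) := -∫_Σ f(s,t) φ(s) η'(t) dt ds - ∫_Σ ∂_t f(s,t) φ(s) η(t) dt ds, where η ∈ C_c^∞([0,∞)) with η ≡ 1 on [0,1]. Moreover, if f_n → f and ∂_t f_n → ∂_t f in L¹_loc(Σ), then f_n(·,0) → f(·,0) in L¹_loc(ℝ). -/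
open MeasureTheory Set Filter Topology

/-- The closed upper half plane Σ = {(s,t) : t ≥ 0}. -/
def UHP : Set (ℝ × ℝ) := {p | 0 ≤ p.2}

/-- `ft` is the distributional time derivative of `f` in the interior of Σ. -/
def HasDistribTDeriv (f ft : ℝ × ℝ → ℝ) : Prop :=
  ∀ φ : ℝ × ℝ → ℝ, ContDiff ℝ (⊤ : ℕ∞) φ → HasCompactSupport φ →
    tsupport φ ⊆ {p : ℝ × ℝ | 0 < p.2} →
    (∫ p in UHP, f p * fderiv ℝ φ p (0, 1)) = -∫ p in UHP, ft p * φ p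

/-- `tr` is the L¹_loc trace of `f` on {t = 0}, defined via the cutoff pairing. -/
def IsTraceAt0 (f ft : ℝ × ℝ → ℝ) (tr : ℝ → ℝ) : Prop :=
  MeasureTheory.LocallyIntegrable tr ∧
  ∀ η : ℝ → ℝ, ContDiff ℝ (⊤ : ℕ∞) η → HasCompactSupport η →
    (∀ t ∈ Set.Icc (0:ℝ) 1, η t = 1) →
  ∀ φ : ℝ → ℝ, Continuous φ → HasCompactSupport φ →
    (∫ s, tr s * φ s) =
      -(∫ p in UHP, f p * φ p.1 * deriv η p.2) - ∫ p in UHP, ft p * φ p.1 * η p.2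

/-!
Integrating out `t` in the two integrals that define the pairing turns it into the pairing of `φ`
with `-∫ η'(t) f(s,t) dt - ∫ η(t) ∂_t f(s,t) dt`, and by Fubini this function of `s` is locally
integrable, with `L¹` norm on `K` at most `sup |η'| ‖f‖ + sup |η| ‖∂_t f‖`, the norms on the right
being those of `L¹` on `K × (supp η ∩ [0, ∞))`. Two cutoffs differ by a function `ψ` vanishing on
`[0, 1]`, so `φ(s) ψ(t)` is, up to its values for `t < 0`, an admissible test function, and the weak
derivative identity says exactly that the pairing does not change. Since the pairing is linear in
`(f, ∂_t f)`, the `L¹` bound applied to differences gives continuity.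
-/

section Calculus

theorem exists_contDiff_tsupport_subset_eqOn_one {E : Type*} [NormedAddCommGroup E]
    [NormedSpace ℝ E] [FiniteDimensional ℝ E] {s U : Set E} (hs : IsClosed s) (hU : IsOpen U)
    (hsU : s ⊆ U) :
    ∃ ρ : E → ℝ, ContDiff ℝ (⊤ : ℕ∞) ρ ∧ tsupport ρ ⊆ U ∧ EqOn ρ 1 s := by
  obtain ⟨ρ, hρ0, hρ1, -⟩ := exists_contMDiffMap_zero_one_nhds_of_isClosed (n := (⊤ : ℕ∞))
    (modelWithCornersSelf ℝ E) hU.isClosed_compl hs (disjoint_compl_left_iff_subset.2 hsU)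
  refine ⟨ρ, ρ.contMDiff.contDiff, fun x hx => ?_, fun x hx => hρ1.self_of_nhdsSet x hx⟩
  by_contra hxU
  exact notMem_tsupport_iff_eventuallyEq.2 (eventually_nhdsSet_iff_forall.1 hρ0 x hxU) hx

theorem eqOn_deriv_of_uniqueDiffOn {𝕜 F : Type*} [NontriviallyNormedField 𝕜]
    [NormedAddCommGroup F] [NormedSpace 𝕜 F] {u v : 𝕜 → F} {s : Set 𝕜} (hs : UniqueDiffOn 𝕜 s)
    (hu : Differentiable 𝕜 u) (hv : Differentiable 𝕜 v) (huv : EqOn u v s) :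
    EqOn (deriv u) (deriv v) s := fun x hx => by
  rw [← (hu x).derivWithin (hs x hx), ← (hv x).derivWithin (hs x hx)]
  exact derivWithin_congr huv (huv hx)

theorem fderiv_mul_fst_snd_apply {𝕜 E : Type*} [NontriviallyNormedField 𝕜] [NormedAddCommGroup E]
    [NormedSpace 𝕜 E] {φ : E → 𝕜} {χ : 𝕜 → 𝕜} {p : E × 𝕜} (hφ : DifferentiableAt 𝕜 φ p.1)
    (hχ : DifferentiableAt 𝕜 χ p.2) :
    fderiv 𝕜 (fun p : E × 𝕜 => φ p.1 * χ p.2) p (0, 1) = φ p.1 * deriv χ p.2 := by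
  have hfst := hφ.hasFDerivAt.comp p hasFDerivAt_fst
  have hsnd := hχ.hasDerivAt.comp_hasFDerivAt p (hasFDerivAt_snd (𝕜 := 𝕜) (p := p))
  have hmul : HasFDerivAt (fun p : E × 𝕜 => φ p.1 * χ p.2) _ p := hfst.mul hsnd
  simp [hmul.fderiv]

end Calculus

section TensorProduct

variable {X Y M : Type*} [TopologicalSpace X] [TopologicalSpace Y] [MulZeroClass M] {φ : X → M}
  {a : Y → M}

theorem tsupport_mul_fst_snd_subset :
    tsupport (fun p : X × Y => φ p.1 * a p.2) ⊆ tsupport φ ×ˢ tsupport a :=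
  closure_minimal
    (fun _ hp => ⟨subset_tsupport _ (left_ne_zero_of_mul hp),
      subset_tsupport _ (right_ne_zero_of_mul hp)⟩)
    ((isClosed_tsupport φ).prod (isClosed_tsupport a))

theorem hasCompactSupport_mul_fst_snd (hφ : HasCompactSupport φ) (ha : HasCompactSupport a) :
    HasCompactSupport fun p : X × Y => φ p.1 * a p.2 :=
  (IsCompact.prod hφ ha).of_isClosed_subset (isClosed_tsupport _) tsupport_mul_fst_snd_subset

end TensorProduct

section SliceIntegral

variable {X Y E : Type*} [MeasurableSpace Y] [NormedAddCommGroup E] [NormedSpace ℝ E]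
  {ν : Measure Y} {a : Y → ℝ} {g : X × Y → E}

/-- The integral of `g` over the slice `{x} × Y` against `ν` with weight `a`, as a function of `x`.
For the half-plane, `ν` is Lebesgue measure on `[0, ∞)` and `a` is a cutoff or its derivative. -/
noncomputable def sliceIntegral (ν : Measure Y) (a : Y → ℝ) (g : X × Y → E) (x : X) : E :=
  ∫ y, a y • g (x, y) ∂ν

theorem sliceIntegral_restrict {L : Set Y} (haL : Function.support a ⊆ L) :
    sliceIntegral (ν.restrict L) a g = sliceIntegral ν a g :=
  funext fun _ => setIntegral_eq_integral_of_forall_compl_eq_zero fun y hy => by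
    rw [Function.notMem_support.1 fun h => hy (haL h), zero_smul]

variable [MeasurableSpace X] {μ : Measure X}

theorem integrable_smul_snd (hg : Integrable g (μ.prod ν)) (ha : AEStronglyMeasurable a ν) {C : ℝ}
    (hC : ∀ y, ‖a y‖ ≤ C) : Integrable (fun p : X × Y => a p.2 • g p) (μ.prod ν) :=
  hg.bdd_smul C ha.comp_snd (.of_forall fun p => hC p.2)

variable [SFinite ν]

theorem integrable_sliceIntegral (hg : Integrable g (μ.prod ν)) (ha : AEStronglyMeasurable a ν)
    {C : ℝ} (hC : ∀ y, ‖a y‖ ≤ C) : Integrable (sliceIntegral ν a g) μ :=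
  (integrable_smul_snd hg ha hC).integral_prod_left

variable [SFinite μ]

theorem integral_smul_sliceIntegral {φ : X → ℝ}
    (h : Integrable (fun p : X × Y => (φ p.1 * a p.2) • g p) (μ.prod ν)) :
    ∫ x, φ x • sliceIntegral ν a g x ∂μ = ∫ p, (φ p.1 * a p.2) • g p ∂μ.prod ν := by
  rw [integral_prod _ h]
  simp only [sliceIntegral, mul_smul, integral_smul]

theorem integral_norm_sliceIntegral_le (hg : Integrable g (μ.prod ν))
    (ha : AEStronglyMeasurable a ν) {C : ℝ} (hC : ∀ y, ‖a y‖ ≤ C) :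
    ∫ x, ‖sliceIntegral ν a g x‖ ∂μ ≤ C * ∫ p, ‖g p‖ ∂μ.prod ν := by
  have hag := integrable_smul_snd hg ha hC
  calc ∫ x, ‖sliceIntegral ν a g x‖ ∂μ
      ≤ ∫ x, ∫ y, ‖a y • g (x, y)‖ ∂ν ∂μ :=
        integral_mono hag.integral_prod_left.norm hag.integral_norm_prod_left
          fun _ => norm_integral_le_integral_norm _
    _ = ∫ p, ‖a p.2 • g p‖ ∂μ.prod ν := (integral_prod _ hag.norm).symm
    _ ≤ ∫ p, C * ‖g p‖ ∂μ.prod ν := integral_mono hag.norm (hg.norm.const_mul C) fun p =>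
        (norm_smul_le _ _).trans (mul_le_mul_of_nonneg_right (hC p.2) (norm_nonneg _))
    _ = C * ∫ p, ‖g p‖ ∂μ.prod ν := integral_const_mul _ _

variable {K : Set X} {L : Set Y}

theorem integrableOn_sliceIntegral (hg : IntegrableOn g (K ×ˢ L) (μ.prod ν))
    (ha : AEStronglyMeasurable a ν) {C : ℝ} (hC : ∀ y, ‖a y‖ ≤ C)
    (haL : Function.support a ⊆ L) : IntegrableOn (sliceIntegral ν a g) K μ := by
  rw [IntegrableOn, ← Measure.prod_restrict] at hg
  rw [IntegrableOn, ← sliceIntegral_restrict haL]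
  exact integrable_sliceIntegral hg ha.restrict hC

theorem setIntegral_norm_sliceIntegral_le (hg : IntegrableOn g (K ×ˢ L) (μ.prod ν))
    (ha : AEStronglyMeasurable a ν) {C : ℝ} (hC : ∀ y, ‖a y‖ ≤ C)
    (haL : Function.support a ⊆ L) :
    ∫ x in K, ‖sliceIntegral ν a g x‖ ∂μ ≤ C * ∫ p in K ×ˢ L, ‖g p‖ ∂μ.prod ν := by
  rw [IntegrableOn, ← Measure.prod_restrict] at hg
  rw [← sliceIntegral_restrict haL, ← Measure.prod_restrict]
  exact integral_norm_sliceIntegral_le hg ha.restrict hC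

theorem locallyIntegrable_sliceIntegral [TopologicalSpace X] [LocallyCompactSpace X]
    [TopologicalSpace Y] [OpensMeasurableSpace Y] (hg : LocallyIntegrable g (μ.prod ν))
    (ha : Continuous a) (hac : HasCompactSupport a) :
    LocallyIntegrable (sliceIntegral ν a g) μ := by
  obtain ⟨C, hC⟩ := hac.exists_bound_of_continuous ha
  exact locallyIntegrable_iff.2 fun K hK =>
    integrableOn_sliceIntegral (hg.integrableOn_isCompact (hK.prod hac))
      ha.aestronglyMeasurable hC (subset_tsupport a)

end SliceIntegral

section UpperHalfPlane

variable {g : ℝ × ℝ → ℝ} {φ a : ℝ → ℝ}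

theorem isClosed_UHP : IsClosed UHP := isClosed_le continuous_const continuous_snd

theorem volume_restrict_UHP :
    (volume : Measure (ℝ × ℝ)).restrict UHP = volume.prod (volume.restrict (Ici (0 : ℝ))) := by
  have hUHP : UHP = univ ×ˢ Ici (0 : ℝ) := by ext; simp [UHP]
  rw [hUHP, Measure.volume_eq_prod, ← Measure.prod_restrict, Measure.restrict_univ]

theorem locallyIntegrableOn_UHP_iff :
    LocallyIntegrableOn g UHP ↔
      LocallyIntegrable g (volume.prod (volume.restrict (Ici (0 : ℝ)))) := by
  rw [locallyIntegrableOn_iff_locallyIntegrable_restrict isClosed_UHP, volume_restrict_UHP]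

theorem integrableOn_UHP_mul_mul (hg : LocallyIntegrableOn g UHP) (hφ : Continuous φ)
    (hφc : HasCompactSupport φ) (ha : Continuous a) (hac : HasCompactSupport a) :
    IntegrableOn (fun p => g p * φ p.1 * a p.2) UHP := by
  rw [IntegrableOn]
  simpa only [smul_eq_mul, ← mul_assoc] using
    ((locallyIntegrableOn_iff_locallyIntegrable_restrict isClosed_UHP).1
      hg).integrable_smul_right_of_hasCompactSupport
      (g := fun p : ℝ × ℝ => φ p.1 * a p.2) (by fun_prop) (hasCompactSupport_mul_fst_snd hφc hac)

theorem integral_sliceIntegral_mul (hg : LocallyIntegrableOn g UHP) (hφ : Continuous φ)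
    (hφc : HasCompactSupport φ) (ha : Continuous a) (hac : HasCompactSupport a) :
    ∫ s, sliceIntegral (volume.restrict (Ici 0)) a g s * φ s =
      ∫ p in UHP, g p * φ p.1 * a p.2 := by
  have h := integral_smul_sliceIntegral
    ((locallyIntegrableOn_UHP_iff.1 hg).integrable_smul_left_of_hasCompactSupport
      (g := fun p : ℝ × ℝ => φ p.1 * a p.2) (by fun_prop) (hasCompactSupport_mul_fst_snd hφc hac))
  simpa only [volume_restrict_UHP, smul_eq_mul, mul_comm, mul_left_comm] using h

end UpperHalfPlane

section TracePairing

/-- The pairing `(f(·,0), φ)` of the trace of `f` with `φ`, computed with the cutoff `η`; the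
function `ft` stands for `∂_t f`. -/
noncomputable def tracePairing (f ft : ℝ × ℝ → ℝ) (η φ : ℝ → ℝ) : ℝ :=
  -(∫ p in UHP, f p * φ p.1 * deriv η p.2) - ∫ p in UHP, ft p * φ p.1 * η p.2

variable {f ft g gt : ℝ × ℝ → ℝ} {η θ φ : ℝ → ℝ}

theorem tracePairing_sub (hf : LocallyIntegrableOn f UHP) (hft : LocallyIntegrableOn ft UHP)
    (hg : LocallyIntegrableOn g UHP) (hgt : LocallyIntegrableOn gt UHP) (hη : ContDiff ℝ 1 η)
    (hηc : HasCompactSupport η) (hφ : Continuous φ) (hφc : HasCompactSupport φ) :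
    tracePairing (f - g) (ft - gt) η φ = tracePairing f ft η φ - tracePairing g gt η φ := by
  simp only [tracePairing, Pi.sub_apply, sub_mul]
  rw [integral_sub (integrableOn_UHP_mul_mul hf hφ hφc hη.continuous_deriv_one hηc.deriv)
      (integrableOn_UHP_mul_mul hg hφ hφc hη.continuous_deriv_one hηc.deriv),
    integral_sub (integrableOn_UHP_mul_mul hft hφ hφc hη.continuous hηc)
      (integrableOn_UHP_mul_mul hgt hφ hφc hη.continuous hηc)]
  ring

theorem tracePairing_sub_cutoff (hf : LocallyIntegrableOn f UHP)
    (hft : LocallyIntegrableOn ft UHP) (hη : ContDiff ℝ 1 η) (hηc : HasCompactSupport η)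
    (hθ : ContDiff ℝ 1 θ) (hθc : HasCompactSupport θ) (hφ : Continuous φ)
    (hφc : HasCompactSupport φ) :
    tracePairing f ft (η - θ) φ = tracePairing f ft η φ - tracePairing f ft θ φ := by
  have hderiv : ∀ t, deriv (η - θ) t = deriv η t - deriv θ t := fun t =>
    deriv_sub (hη.differentiable_one t) (hθ.differentiable_one t)
  simp only [tracePairing, hderiv, Pi.sub_apply, mul_sub]
  rw [integral_sub (integrableOn_UHP_mul_mul hf hφ hφc hη.continuous_deriv_one hηc.deriv)
      (integrableOn_UHP_mul_mul hf hφ hφc hθ.continuous_deriv_one hθc.deriv),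
    integral_sub (integrableOn_UHP_mul_mul hft hφ hφc hη.continuous hηc)
      (integrableOn_UHP_mul_mul hft hφ hφc hθ.continuous hθc)]
  ring

theorem HasDistribTDeriv.tracePairing_eq_zero_of_tsupport_subset_Ioi (h : HasDistribTDeriv f ft)
    {χ : ℝ → ℝ} (hχ : ContDiff ℝ (⊤ : ℕ∞) χ) (hχc : HasCompactSupport χ)
    (hχ0 : tsupport χ ⊆ Ioi 0) (hφ : ContDiff ℝ (⊤ : ℕ∞) φ) (hφc : HasCompactSupport φ) :
    tracePairing f ft χ φ = 0 := by
  have hweak := h (fun p => φ p.1 * χ p.2)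
    ((hφ.comp contDiff_fst).mul (hχ.comp contDiff_snd)) (hasCompactSupport_mul_fst_snd hφc hχc)
    fun p hp => hχ0 (tsupport_mul_fst_snd_subset hp).2
  have hfderiv : ∀ p : ℝ × ℝ,
      fderiv ℝ (fun p : ℝ × ℝ => φ p.1 * χ p.2) p (0, 1) = φ p.1 * deriv χ p.2 := fun p =>
    fderiv_mul_fst_snd_apply (hφ.differentiable (by simp) _) (hχ.differentiable (by simp) _)
  simp only [hfderiv, ← mul_assoc] at hweak
  rw [tracePairing, hweak, neg_neg, sub_self]

theorem tracePairing_congr_cutoff (hη : Differentiable ℝ η) (hθ : Differentiable ℝ θ)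
    (h : EqOn η θ (Ici 0)) : tracePairing f ft η φ = tracePairing f ft θ φ := by
  have hderiv := eqOn_deriv_of_uniqueDiffOn (uniqueDiffOn_Ici 0) hη hθ h
  have hUHP : MeasurableSet UHP := isClosed_UHP.measurableSet
  rw [tracePairing, tracePairing,
    setIntegral_congr_fun hUHP fun p hp => congrArg (f p * φ p.1 * ·) (hderiv hp),
    setIntegral_congr_fun hUHP fun p hp => congrArg (ft p * φ p.1 * ·) (h hp)]

-- Only the values of `ψ` on `[0, ∞)` enter the pairing, and there `ψ` agrees with `ρ * ψ` for a
-- smooth step `ρ` supported in `(0, ∞)`; so `φ(s) ψ(t)` may be used as a test function.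
theorem HasDistribTDeriv.tracePairing_eq_zero (h : HasDistribTDeriv f ft) {ψ : ℝ → ℝ}
    (hψ : ContDiff ℝ (⊤ : ℕ∞) ψ) (hψc : HasCompactSupport ψ) {ε : ℝ} (hε : 0 < ε)
    (hψ0 : EqOn ψ 0 (Icc 0 ε)) (hφ : ContDiff ℝ (⊤ : ℕ∞) φ) (hφc : HasCompactSupport φ) :
    tracePairing f ft ψ φ = 0 := by
  obtain ⟨ρ, hρ, hρ0, hρ1⟩ :=
    exists_contDiff_tsupport_subset_eqOn_one isClosed_Ici isOpen_Ioi (Ici_subset_Ioi.2 hε)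
  have hρψ : EqOn ψ (ρ * ψ) (Ici 0) := fun t ht => by
    rcases le_total t ε with htε | htε
    · simp [hψ0 ⟨ht, htε⟩]
    · simp [hρ1 htε]
  rw [tracePairing_congr_cutoff (hψ.differentiable (by simp))
    ((hρ.mul hψ).differentiable (by simp)) hρψ]
  exact h.tracePairing_eq_zero_of_tsupport_subset_Ioi (hρ.mul hψ) hψc.mul_left
    ((closure_mono (Function.support_mul_subset_left ρ ψ)).trans hρ0) hφ hφc

end TracePairing

/-- A cutoff in time near `t = 0`: the class of functions `η` admitted in the definition of the
trace. They are defined on all of `ℝ`, but only their values on `[0, ∞)` matter. -/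
structure IsTimeCutoff (η : ℝ → ℝ) : Prop where
  contDiff : ContDiff ℝ (⊤ : ℕ∞) η
  hasCompactSupport : HasCompactSupport η
  eqOn_one : EqOn η 1 (Icc 0 1)

theorem IsTimeCutoff.contDiff_one {η : ℝ → ℝ} (hη : IsTimeCutoff η) : ContDiff ℝ 1 η :=
  hη.contDiff.of_le (mod_cast le_top)

theorem exists_isTimeCutoff : ∃ η, IsTimeCutoff η := by
  obtain ⟨η, hη, hηs, hη1⟩ := exists_contDiff_tsupport_subset_eqOn_one
    (isClosed_Icc (a := (0 : ℝ)) (b := 1)) (isOpen_Ioo (a := -1) (b := 2))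
    (Icc_subset_Ioo (by norm_num) (by norm_num))
  exact ⟨η, hη, isCompact_Icc.of_isClosed_subset (isClosed_tsupport η)
    (hηs.trans Ioo_subset_Icc_self), hη1⟩

theorem HasDistribTDeriv.tracePairing_eq {f ft : ℝ × ℝ → ℝ} {η θ φ : ℝ → ℝ}
    (h : HasDistribTDeriv f ft) (hf : LocallyIntegrableOn f UHP)
    (hft : LocallyIntegrableOn ft UHP) (hη : IsTimeCutoff η) (hθ : IsTimeCutoff θ)
    (hφ : ContDiff ℝ (⊤ : ℕ∞) φ) (hφc : HasCompactSupport φ) :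
    tracePairing f ft η φ = tracePairing f ft θ φ := by
  have hψ0 : EqOn (η - θ) 0 (Icc 0 1) := fun t ht => by simp [hη.eqOn_one ht, hθ.eqOn_one ht]
  rw [← sub_eq_zero, ← tracePairing_sub_cutoff hf hft hη.contDiff_one hη.hasCompactSupport
    hθ.contDiff_one hθ.hasCompactSupport hφ.continuous hφc]
  exact h.tracePairing_eq_zero (hη.contDiff.sub hθ.contDiff)
    (hη.hasCompactSupport.sub hθ.hasCompactSupport) one_pos hψ0 hφ hφc

section CutoffTrace

/-- The function representing the functional `tracePairing f ft η`, obtained by integrating out the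
time variable. -/
noncomputable def cutoffTrace (f ft : ℝ × ℝ → ℝ) (η : ℝ → ℝ) : ℝ → ℝ :=
  -sliceIntegral (volume.restrict (Ici 0)) (deriv η) f -
    sliceIntegral (volume.restrict (Ici 0)) η ft

variable {f ft : ℝ × ℝ → ℝ} {η θ φ tr : ℝ → ℝ}

theorem locallyIntegrable_cutoffTrace (hf : LocallyIntegrableOn f UHP)
    (hft : LocallyIntegrableOn ft UHP) (hη : ContDiff ℝ 1 η) (hηc : HasCompactSupport η) :
    LocallyIntegrable (cutoffTrace f ft η) :=
  (locallyIntegrable_sliceIntegral (locallyIntegrableOn_UHP_iff.1 hf) hη.continuous_deriv_one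
    hηc.deriv).neg.sub
    (locallyIntegrable_sliceIntegral (locallyIntegrableOn_UHP_iff.1 hft) hη.continuous hηc)

theorem integral_cutoffTrace_mul (hf : LocallyIntegrableOn f UHP)
    (hft : LocallyIntegrableOn ft UHP) (hη : ContDiff ℝ 1 η) (hηc : HasCompactSupport η)
    (hφ : Continuous φ) (hφc : HasCompactSupport φ) :
    ∫ s, cutoffTrace f ft η s * φ s = tracePairing f ft η φ := by
  have hint := (locallyIntegrable_sliceIntegral (locallyIntegrableOn_UHP_iff.1 hf)
    hη.continuous_deriv_one hηc.deriv).integrable_smul_right_of_hasCompactSupport hφ hφc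
  have hintt := (locallyIntegrable_sliceIntegral (locallyIntegrableOn_UHP_iff.1 hft)
    hη.continuous hηc).integrable_smul_right_of_hasCompactSupport hφ hφc
  simp only [smul_eq_mul] at hint hintt
  simp only [cutoffTrace, Pi.sub_apply, Pi.neg_apply, sub_mul, neg_mul]
  rw [integral_sub hint.fun_neg hintt, integral_neg,
    integral_sliceIntegral_mul hf hφ hφc hη.continuous_deriv_one hηc.deriv,
    integral_sliceIntegral_mul hft hφ hφc hη.continuous hηc, tracePairing]

theorem ae_eq_cutoffTrace_of_integral_mul_eq (hf : LocallyIntegrableOn f UHP)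
    (hft : LocallyIntegrableOn ft UHP) (hη : ContDiff ℝ 1 η) (hηc : HasCompactSupport η)
    (htr : LocallyIntegrable tr)
    (h : ∀ φ : ℝ → ℝ, ContDiff ℝ (⊤ : ℕ∞) φ → HasCompactSupport φ →
      ∫ s, tr s * φ s = tracePairing f ft η φ) :
    tr =ᵐ[volume] cutoffTrace f ft η := by
  refine ae_eq_of_integral_contDiff_smul_eq htr (locallyIntegrable_cutoffTrace hf hft hη hηc)
    fun φ hφ hφc => ?_
  simp only [smul_eq_mul, mul_comm (φ _)]
  rw [h φ hφ hφc, integral_cutoffTrace_mul hf hft hη hηc hφ.continuous hφc]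

theorem HasDistribTDeriv.cutoffTrace_ae_eq (h : HasDistribTDeriv f ft)
    (hf : LocallyIntegrableOn f UHP) (hft : LocallyIntegrableOn ft UHP) (hη : IsTimeCutoff η)
    (hθ : IsTimeCutoff θ) : cutoffTrace f ft η =ᵐ[volume] cutoffTrace f ft θ :=
  ae_eq_cutoffTrace_of_integral_mul_eq hf hft hθ.contDiff_one hθ.hasCompactSupport
    (locallyIntegrable_cutoffTrace hf hft hη.contDiff_one hη.hasCompactSupport) fun φ hφ hφc => by
    rw [integral_cutoffTrace_mul hf hft hη.contDiff_one hη.hasCompactSupport hφ.continuous hφc,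
      h.tracePairing_eq hf hft hη hθ hφ hφc]

theorem abs_cutoffTrace_le {s : ℝ} :
    |cutoffTrace f ft η s| ≤ ‖sliceIntegral (volume.restrict (Ici 0)) (deriv η) f s‖ +
      ‖sliceIntegral (volume.restrict (Ici 0)) η ft s‖ := by
  rw [cutoffTrace, Pi.sub_apply, Pi.neg_apply, ← Real.norm_eq_abs,
    ← norm_neg (sliceIntegral (volume.restrict (Ici 0)) (deriv η) f s)]
  exact norm_sub_le _ _

theorem setIntegral_abs_cutoffTrace_le (hf : LocallyIntegrableOn f UHP)
    (hft : LocallyIntegrableOn ft UHP) (hη : ContDiff ℝ 1 η) (hηc : HasCompactSupport η)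
    {C C' : ℝ} (hC : ∀ t, ‖η t‖ ≤ C) (hC' : ∀ t, ‖deriv η t‖ ≤ C') {K : Set ℝ}
    (hK : IsCompact K) :
    ∫ s in K, |cutoffTrace f ft η s| ≤
      C' * (∫ p in K ×ˢ tsupport η ∩ UHP, |f p|) +
        C * ∫ p in K ×ˢ tsupport η ∩ UHP, |ft p| := by
  have hloc := locallyIntegrableOn_UHP_iff.1 hf
  have hloct := locallyIntegrableOn_UHP_iff.1 hft
  have hslice := (locallyIntegrable_sliceIntegral hloc hη.continuous_deriv_one
    hηc.deriv).integrableOn_isCompact hK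
  have hslicet := (locallyIntegrable_sliceIntegral hloct hη.continuous
    hηc).integrableOn_isCompact hK
  rw [← Measure.restrict_restrict' isClosed_UHP.measurableSet, volume_restrict_UHP]
  calc ∫ s in K, |cutoffTrace f ft η s|
      ≤ ∫ s in K, (‖sliceIntegral (volume.restrict (Ici 0)) (deriv η) f s‖ +
          ‖sliceIntegral (volume.restrict (Ici 0)) η ft s‖) :=
        integral_mono (hslice.neg.sub hslicet).norm (hslice.norm.add hslicet.norm) fun _ =>
          abs_cutoffTrace_le
    _ = (∫ s in K, ‖sliceIntegral (volume.restrict (Ici 0)) (deriv η) f s‖) +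
          ∫ s in K, ‖sliceIntegral (volume.restrict (Ici 0)) η ft s‖ :=
        integral_add hslice.norm hslicet.norm
    _ ≤ _ := add_le_add
        (setIntegral_norm_sliceIntegral_le (hloc.integrableOn_isCompact (hK.prod hηc))
          hη.continuous_deriv_one.aestronglyMeasurable hC' support_deriv_subset)
        (setIntegral_norm_sliceIntegral_le (hloct.integrableOn_isCompact (hK.prod hηc))
          hη.continuous.aestronglyMeasurable hC (subset_tsupport η))

end CutoffTrace

theorem HasDistribTDeriv.isTraceAt0_cutoffTrace {f ft : ℝ × ℝ → ℝ} {η : ℝ → ℝ}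
    (h : HasDistribTDeriv f ft) (hf : LocallyIntegrableOn f UHP)
    (hft : LocallyIntegrableOn ft UHP) (hη : IsTimeCutoff η) :
    IsTraceAt0 f ft (cutoffTrace f ft η) := by
  refine ⟨locallyIntegrable_cutoffTrace hf hft hη.contDiff_one hη.hasCompactSupport,
    fun θ hθ hθc hθ1 φ hφ hφc => ?_⟩
  have hθcut : IsTimeCutoff θ := ⟨hθ, hθc, hθ1⟩
  calc ∫ s, cutoffTrace f ft η s * φ s
      = ∫ s, cutoffTrace f ft θ s * φ s :=
        integral_congr_ae ((h.cutoffTrace_ae_eq hf hft hη hθcut).mul .rfl)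
    _ = tracePairing f ft θ φ :=
        integral_cutoffTrace_mul hf hft hθcut.contDiff_one hθc hφ hφc

namespace IsTraceAt0

variable {f ft g gt : ℝ × ℝ → ℝ} {tr tr' η : ℝ → ℝ}

theorem integral_mul_eq_tracePairing {φ : ℝ → ℝ} (h : IsTraceAt0 f ft tr) (hη : IsTimeCutoff η)
    (hφ : Continuous φ) (hφc : HasCompactSupport φ) :
    ∫ s, tr s * φ s = tracePairing f ft η φ :=
  h.2 η hη.contDiff hη.hasCompactSupport hη.eqOn_one φ hφ hφc

theorem ae_eq_cutoffTrace (h : IsTraceAt0 f ft tr) (hf : LocallyIntegrableOn f UHP)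
    (hft : LocallyIntegrableOn ft UHP) (hη : IsTimeCutoff η) :
    tr =ᵐ[volume] cutoffTrace f ft η :=
  ae_eq_cutoffTrace_of_integral_mul_eq hf hft hη.contDiff_one hη.hasCompactSupport h.1
    fun _ hφ hφc => h.integral_mul_eq_tracePairing hη hφ.continuous hφc

theorem sub (h : IsTraceAt0 f ft tr) (h' : IsTraceAt0 g gt tr')
    (hf : LocallyIntegrableOn f UHP) (hft : LocallyIntegrableOn ft UHP)
    (hg : LocallyIntegrableOn g UHP) (hgt : LocallyIntegrableOn gt UHP) :
    IsTraceAt0 (f - g) (ft - gt) (tr - tr') := by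
  refine ⟨h.1.sub h'.1, fun η hη hηc hη1 φ hφ hφc => ?_⟩
  have hcut : IsTimeCutoff η := ⟨hη, hηc, hη1⟩
  calc ∫ s, (tr - tr') s * φ s
      = (∫ s, tr s * φ s) - ∫ s, tr' s * φ s := by
        simp only [Pi.sub_apply, sub_mul]
        exact integral_sub (h.1.integrable_smul_right_of_hasCompactSupport hφ hφc)
          (h'.1.integrable_smul_right_of_hasCompactSupport hφ hφc)
    _ = tracePairing (f - g) (ft - gt) η φ := by
        rw [h.integral_mul_eq_tracePairing hcut hφ hφc,
          h'.integral_mul_eq_tracePairing hcut hφ hφc,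
          tracePairing_sub hf hft hg hgt hcut.contDiff_one hηc hφ hφc]

theorem setIntegral_abs_le (h : IsTraceAt0 f ft tr) (hf : LocallyIntegrableOn f UHP)
    (hft : LocallyIntegrableOn ft UHP) (hη : IsTimeCutoff η) {C C' : ℝ} (hC : ∀ t, ‖η t‖ ≤ C)
    (hC' : ∀ t, ‖deriv η t‖ ≤ C') {K : Set ℝ} (hK : IsCompact K) :
    ∫ s in K, |tr s| ≤
      C' * (∫ p in K ×ˢ tsupport η ∩ UHP, |f p|) +
        C * ∫ p in K ×ˢ tsupport η ∩ UHP, |ft p| := by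
  have hae : (fun s => |tr s|) =ᵐ[volume.restrict K] fun s => |cutoffTrace f ft η s| :=
    ae_restrict_of_ae ((h.ae_eq_cutoffTrace hf hft hη).fun_comp abs)
  rw [integral_congr_ae hae]
  exact setIntegral_abs_cutoffTrace_le hf hft hη.contDiff_one hη.hasCompactSupport hC hC' hK

theorem tendsto_setIntegral_abs_sub {ι : Type*} {l : Filter ι} {fn ftn : ι → ℝ × ℝ → ℝ}
    {trn : ι → ℝ → ℝ} (htr : IsTraceAt0 f ft tr) (htrn : ∀ n, IsTraceAt0 (fn n) (ftn n) (trn n))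
    (hf : LocallyIntegrableOn f UHP) (hft : LocallyIntegrableOn ft UHP)
    (hfn : ∀ n, LocallyIntegrableOn (fn n) UHP) (hftn : ∀ n, LocallyIntegrableOn (ftn n) UHP)
    (hlim : ∀ K : Set (ℝ × ℝ), IsCompact K → K ⊆ UHP →
      Tendsto (fun n => ∫ p in K, |fn n p - f p|) l (𝓝 0))
    (hlimt : ∀ K : Set (ℝ × ℝ), IsCompact K → K ⊆ UHP →
      Tendsto (fun n => ∫ p in K, |ftn n p - ft p|) l (𝓝 0))
    {K : Set ℝ} (hK : IsCompact K) :
    Tendsto (fun n => ∫ s in K, |trn n s - tr s|) l (𝓝 0) := by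
  obtain ⟨η, hη⟩ := exists_isTimeCutoff
  obtain ⟨C, hC⟩ := hη.hasCompactSupport.exists_bound_of_continuous hη.contDiff.continuous
  obtain ⟨C', hC'⟩ := hη.hasCompactSupport.deriv.exists_bound_of_continuous
    hη.contDiff_one.continuous_deriv_one
  have hQ : IsCompact (K ×ˢ tsupport η ∩ UHP) :=
    (hK.prod hη.hasCompactSupport).inter_right isClosed_UHP
  have hbound := ((hlim _ hQ inter_subset_right).const_mul C').add
    ((hlimt _ hQ inter_subset_right).const_mul C)
  rw [mul_zero, mul_zero, add_zero] at hbound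
  exact squeeze_zero (fun _ => integral_nonneg fun _ => abs_nonneg _)
    (fun n => ((htrn n).sub htr (hfn n) (hftn n) hf hft).setIntegral_abs_le ((hfn n).sub hf)
      ((hftn n).sub hft) hη hC hC' hK) hbound

end IsTraceAt0

/-- existence and L¹_loc continuity of the trace at t = 0. -/
theorem stmt17 :
    (∀ f ft : ℝ × ℝ → ℝ,
      MeasureTheory.LocallyIntegrableOn f UHP →
      MeasureTheory.LocallyIntegrableOn ft UHP →
      HasDistribTDeriv f ft → ∃ tr : ℝ → ℝ, IsTraceAt0 f ft tr) ∧
    (∀ (f ft : ℝ × ℝ → ℝ) (fn ftn : ℕ → ℝ × ℝ → ℝ) (tr : ℝ → ℝ) (trn : ℕ → ℝ → ℝ),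
      MeasureTheory.LocallyIntegrableOn f UHP →
      MeasureTheory.LocallyIntegrableOn ft UHP →
      HasDistribTDeriv f ft →
      (∀ n, MeasureTheory.LocallyIntegrableOn (fn n) UHP) →
      (∀ n, MeasureTheory.LocallyIntegrableOn (ftn n) UHP) →
      (∀ n, HasDistribTDeriv (fn n) (ftn n)) →
      IsTraceAt0 f ft tr →
      (∀ n, IsTraceAt0 (fn n) (ftn n) (trn n)) →
      (∀ K : Set (ℝ × ℝ), IsCompact K → K ⊆ UHP →
        Tendsto (fun n => ∫ p in K, |fn n p - f p|) atTop (nhds 0)) →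
      (∀ K : Set (ℝ × ℝ), IsCompact K → K ⊆ UHP →
        Tendsto (fun n => ∫ p in K, |ftn n p - ft p|) atTop (nhds 0)) →
      ∀ K : Set ℝ, IsCompact K →
        Tendsto (fun n => ∫ s in K, |trn n s - tr s|) atTop (nhds 0)) := by
  refine ⟨fun f ft hf hft h => ?_, ?_⟩
  · obtain ⟨η, hη⟩ := exists_isTimeCutoff
    exact ⟨_, h.isTraceAt0_cutoffTrace hf hft hη⟩
  · intro f ft fn ftn tr trn hf hft _ hfn hftn _ htr htrn hlim hlimt K hK
    exact htr.tendsto_setIntegral_abs_sub htrn hf hft hfn hftn hlim hlimt hK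
end

section
/- Let t_k ∈ (0,1) be an increasing sequence satisfying 1 - t_{k+1} ≤ (1-t_k)/4 for all k ≥ 1, and let g : (0,1) → [0,∞) be integrable satisfying (1/(1-t_{k+1})) ∫_{t_{k+1}}^1 g(s) ds ≤ (1/(4(1-t_k))) ∫_{t_k}^1 g(s) ds for all k. Define λ(t) = 2^k for t ∈ [t_k, t_{k+1}). Then (1/(1-t_j)) ∫_{t_j}^1 λ(s) g(s) ds ≤ C 2^{-j} (1/(1-t_1)) ∫_{t_1}^1 g(s) ds, so in particular (1/(1-t_j)) ∫_{t_j}^1 λ(s) g(s) ds → 0 as j → ∞. -/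
open MeasureTheory Set Filter Topology
open scoped Function

/-!
The tails `A k = (t k, T]` are nested with null intersection, so `(t j, T]` is, up to a null set,
the disjoint union of the shells `A k \ A (k + 1)`, `j ≤ k`, on which `λ = r ^ k` a.e. If the
lengths of the tails shrink by `q` and the averages of `g` by `ρ`, the integrals of `g` over the
tails shrink by `q * ρ`. Bounding the integral of `g` over a shell by the one over the whole tail
dominates `∫ λ g` by a geometric series of ratio `q * ρ * r`; dividing by the length of the tail
leaves the factor `(ρ * r) ^ j`. Only the nesting matters, so the argument works for sets in a
measure space.
-/

section Shells

variable {α : Type*} {s : ℕ → Set α}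

lemma iUnion_sdiff_succ_of_antitone (hs : Antitone s) :
    ⋃ n, s n \ s (n + 1) = s 0 \ ⋂ n, s n := by
  ext x
  simp only [mem_iUnion, Set.mem_sdiff, mem_iInter, not_forall]
  constructor
  · rintro ⟨n, hx, hx'⟩
    exact ⟨hs n.zero_le hx, n + 1, hx'⟩
  · rintro ⟨hx₀, n, hxn⟩
    by_contra! h
    exact hxn (Nat.rec hx₀ h n)

lemma pairwise_disjoint_sdiff_succ_of_antitone (hs : Antitone s) :
    Pairwise (Disjoint on fun n => s n \ s (n + 1)) :=
  (pairwise_disjoint_on _).2 fun _ _ hmn =>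
    disjoint_sdiff_left.mono_right (sdiff_subset.trans (hs hmn))

variable [MeasurableSpace α] {μ : Measure α}

lemma iUnion_sdiff_succ_ae_eq_of_antitone (hs : Antitone s) (hnull : μ (⋂ n, s n) = 0) :
    (⋃ n, s n \ s (n + 1) : Set α) =ᵐ[μ] s 0 := by
  rw [iUnion_sdiff_succ_of_antitone hs]
  exact sdiff_null_ae_eq_self hnull

lemma measure_iInter_eq_zero_of_measureReal_succ_le {q : ℝ} (hq₀ : 0 ≤ q) (hq₁ : q < 1)
    (hfin : ∀ n, μ (s n) ≠ ⊤) (hdecay : ∀ n, μ.real (s (n + 1)) ≤ q * μ.real (s n)) :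
    μ (⋂ n, s n) = 0 := by
  have hle (n : ℕ) : μ.real (⋂ n, s n) ≤ q ^ n * μ.real (s 0) :=
    (measureReal_mono (iInter_subset s n) (hfin n)).trans
      (le_geom (u := fun n => μ.real (s n)) hq₀ n fun k _ => hdecay k)
  have hlim : Tendsto (fun n => q ^ n * μ.real (s 0)) atTop (𝓝 0) := by
    simpa only [zero_mul] using
      (tendsto_pow_atTop_nhds_zero_of_lt_one hq₀ hq₁).mul_const (μ.real (s 0))
  have hzero : μ.real (⋂ n, s n) = 0 := (ge_of_tendsto' hlim hle).antisymm measureReal_nonneg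
  exact (measureReal_eq_zero_iff (measure_ne_top_of_subset (iInter_subset s 0) (hfin 0))).1 hzero

variable {E : Type*} [NormedAddCommGroup E] [NormedSpace ℝ E] {f g : α → E} {c : ℕ → ℝ}

lemma integrableOn_of_ae_eq_smul_on_sdiff_succ (hs : Antitone s) (hnull : μ (⋂ n, s n) = 0)
    (hg : IntegrableOn g (s 0) μ)
    (hf : ∀ n, f =ᵐ[μ.restrict (s n \ s (n + 1))] fun x => c n • g x)
    (hsum : Summable fun n => |c n| * ∫ x in s n \ s (n + 1), ‖g x‖ ∂μ) :
    IntegrableOn f (s 0) μ := by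
  refine IntegrableOn.congr_set_ae ?_ (iUnion_sdiff_succ_ae_eq_of_antitone hs hnull).symm
  refine integrableOn_iUnion_of_summable_integral_norm (fun n => ?_) (hsum.congr fun n => ?_)
  · have hgn : IntegrableOn g (s n \ s (n + 1)) μ :=
      hg.mono_set (sdiff_subset.trans (hs n.zero_le))
    exact Integrable.congr (hgn.smul (c n)) (hf n).symm
  · calc |c n| * ∫ x in s n \ s (n + 1), ‖g x‖ ∂μ
        = ∫ x in s n \ s (n + 1), ‖c n • g x‖ ∂μ := by
          simp only [norm_smul, Real.norm_eq_abs, integral_const_mul]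
      _ = ∫ x in s n \ s (n + 1), ‖f x‖ ∂μ := integral_congr_ae ((hf n).symm.fun_comp norm)

lemma hasSum_setIntegral_of_ae_eq_smul_on_sdiff_succ (hs : Antitone s)
    (hsm : ∀ n, MeasurableSet (s n)) (hnull : μ (⋂ n, s n) = 0) (hfi : IntegrableOn f (s 0) μ)
    (hf : ∀ n, f =ᵐ[μ.restrict (s n \ s (n + 1))] fun x => c n • g x) :
    HasSum (fun n => c n • ∫ x in s n \ s (n + 1), g x ∂μ) (∫ x in s 0, f x ∂μ) := by
  have hae := iUnion_sdiff_succ_ae_eq_of_antitone hs hnull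
  have hpiece (n : ℕ) :
      ∫ x in s n \ s (n + 1), f x ∂μ = c n • ∫ x in s n \ s (n + 1), g x ∂μ :=
    (integral_congr_ae (hf n)).trans (integral_smul _ _)
  simpa only [hpiece, setIntegral_congr_set hae] using
    hasSum_integral_iUnion (fun n => (hsm n).diff (hsm (n + 1)))
      (pairwise_disjoint_sdiff_succ_of_antitone hs) (hfi.congr_set_ae hae)

end Shells

section GeometricDecay

variable {α : Type*} [MeasurableSpace α] {μ : Measure α} {s : ℕ → Set α} {f g : α → ℝ}

theorem setIntegral_le_of_geometric_decay {c : ℕ → ℝ} {θ : ℝ} (hs : Antitone s)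
    (hsm : ∀ n, MeasurableSet (s n)) (hnull : μ (⋂ n, s n) = 0)
    (hg₀ : 0 ≤ᵐ[μ.restrict (s 0)] g) (hgi : IntegrableOn g (s 0) μ) (hc : ∀ n, 0 ≤ c n)
    (hθ₀ : 0 ≤ θ) (hθ₁ : θ < 1)
    (hdecay : ∀ n, c (n + 1) * ∫ x in s (n + 1), g x ∂μ ≤ θ * (c n * ∫ x in s n, g x ∂μ))
    (hf : ∀ n, f =ᵐ[μ.restrict (s n \ s (n + 1))] fun x => c n * g x) :
    IntegrableOn f (s 0) μ ∧ 0 ≤ ∫ x in s 0, f x ∂μ ∧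
      ∫ x in s 0, f x ∂μ ≤ (1 - θ)⁻¹ * (c 0 * ∫ x in s 0, g x ∂μ) := by
  have hshell (n : ℕ) : s n \ s (n + 1) ⊆ s 0 := sdiff_subset.trans (hs n.zero_le)
  have hg₀' (n : ℕ) : 0 ≤ᵐ[μ.restrict (s n \ s (n + 1))] g :=
    ae_restrict_of_ae_restrict_of_subset (hshell n) hg₀
  have hterm_nonneg (n : ℕ) : 0 ≤ c n * ∫ x in s n \ s (n + 1), g x ∂μ :=
    mul_nonneg (hc n) (integral_nonneg_of_ae (hg₀' n))
  have hterm_le (n : ℕ) :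
      c n * ∫ x in s n \ s (n + 1), g x ∂μ ≤ θ ^ n * (c 0 * ∫ x in s 0, g x ∂μ) :=
    calc c n * ∫ x in s n \ s (n + 1), g x ∂μ
        ≤ c n * ∫ x in s n, g x ∂μ :=
          mul_le_mul_of_nonneg_left
            (setIntegral_mono_set (hgi.mono_set (hs n.zero_le))
              (ae_restrict_of_ae_restrict_of_subset (hs n.zero_le) hg₀)
              (LE.le.eventuallyLE sdiff_subset))
            (hc n)
      _ ≤ θ ^ n * (c 0 * ∫ x in s 0, g x ∂μ) :=
          le_geom (u := fun n => c n * ∫ x in s n, g x ∂μ) hθ₀ n fun k _ => hdecay k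
  have hgeom := (hasSum_geometric_of_lt_one hθ₀ hθ₁).mul_right (c 0 * ∫ x in s 0, g x ∂μ)
  have hnorm (n : ℕ) :
      |c n| * ∫ x in s n \ s (n + 1), ‖g x‖ ∂μ = c n * ∫ x in s n \ s (n + 1), g x ∂μ := by
    rw [abs_of_nonneg (hc n), integral_congr_ae ((hg₀' n).mono fun x hx => Real.norm_of_nonneg hx)]
  have hfi : IntegrableOn f (s 0) μ :=
    integrableOn_of_ae_eq_smul_on_sdiff_succ hs hnull hgi hf <| by
      simpa only [hnorm] using hgeom.summable.of_nonneg_of_le hterm_nonneg hterm_le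
  have hsum := hasSum_setIntegral_of_ae_eq_smul_on_sdiff_succ hs hsm hnull hfi hf
  exact ⟨hfi, hsum.nonneg hterm_nonneg, hasSum_le hterm_le hsum hgeom⟩

theorem setIntegral_tail_le_of_geometric_decay {θ r : ℝ} (hs : Antitone s)
    (hsm : ∀ n, MeasurableSet (s n)) (hnull : μ (⋂ n, s n) = 0)
    (hg₀ : 0 ≤ᵐ[μ.restrict (s 0)] g) (hgi : IntegrableOn g (s 0) μ)
    (hθ : 0 ≤ θ) (hr : 0 ≤ r) (hθr : θ * r < 1)
    (hdecay : ∀ n, ∫ x in s (n + 1), g x ∂μ ≤ θ * ∫ x in s n, g x ∂μ)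
    (hf : ∀ n, f =ᵐ[μ.restrict (s n \ s (n + 1))] fun x => r ^ n * g x) (j : ℕ) :
    IntegrableOn f (s j) μ ∧ 0 ≤ ∫ x in s j, f x ∂μ ∧
      ∫ x in s j, f x ∂μ ≤ (1 - θ * r)⁻¹ * (r ^ j * ∫ x in s j, g x ∂μ) := by
  have hnull_tail : μ (⋂ n, s (j + n)) = 0 :=
    measure_mono_null
      (subset_iInter fun n => (iInter_subset _ n).trans (hs (Nat.le_add_left n j))) hnull
  have hdecay_tail (n : ℕ) : r ^ (j + (n + 1)) * ∫ x in s (j + (n + 1)), g x ∂μ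
      ≤ θ * r * (r ^ (j + n) * ∫ x in s (j + n), g x ∂μ) :=
    calc r ^ (j + (n + 1)) * ∫ x in s (j + (n + 1)), g x ∂μ
        ≤ r ^ (j + (n + 1)) * (θ * ∫ x in s (j + n), g x ∂μ) := by gcongr; exact hdecay (j + n)
      _ = θ * r * (r ^ (j + n) * ∫ x in s (j + n), g x ∂μ) := by ring
  exact setIntegral_le_of_geometric_decay
    (s := fun n => s (j + n)) (c := fun n => r ^ (j + n))
    (hs.comp_monotone (monotone_id.const_add j)) (fun n => hsm (j + n)) hnull_tail
    (ae_restrict_of_ae_restrict_of_subset (hs j.zero_le) hg₀) (hgi.mono_set (hs j.zero_le))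
    (fun n => pow_nonneg hr (j + n)) (mul_nonneg hθ hr) hθr hdecay_tail fun n => hf (j + n)

lemma setAverage_nonneg_of_setIntegral_nonneg {A : Set α} (h : 0 ≤ ∫ x in A, g x ∂μ) :
    0 ≤ ⨍ x in A, g x ∂μ := by
  rw [setAverage_eq]
  exact smul_nonneg (inv_nonneg.2 measureReal_nonneg) h

lemma setIntegral_le_of_setAverage_le {A B : Set α} {q ρ : ℝ} (hA : μ A ≠ ⊤) (hB : μ B ≠ ⊤)
    (hg₀ : 0 ≤ ⨍ x in A, g x ∂μ) (hρ : 0 ≤ ρ) (hAB : μ.real B ≤ q * μ.real A)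
    (havg : ⨍ x in B, g x ∂μ ≤ ρ * ⨍ x in A, g x ∂μ) :
    ∫ x in B, g x ∂μ ≤ q * ρ * ∫ x in A, g x ∂μ := by
  rw [← measure_smul_setAverage g hA, ← measure_smul_setAverage g hB, smul_eq_mul, smul_eq_mul]
  calc μ.real B * ⨍ x in B, g x ∂μ
      ≤ μ.real B * (ρ * ⨍ x in A, g x ∂μ) := by gcongr
    _ ≤ q * μ.real A * (ρ * ⨍ x in A, g x ∂μ) := by gcongr
    _ = q * ρ * (μ.real A * ⨍ x in A, g x ∂μ) := by ring

theorem setAverage_le_of_geometric_decay {q ρ r : ℝ} (hs : Antitone s)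
    (hsm : ∀ n, MeasurableSet (s n)) (hfin : μ (s 0) ≠ ⊤)
    (hq₀ : 0 ≤ q) (hq₁ : q < 1) (hρ : 0 ≤ ρ) (hr : 0 ≤ r) (hqρr : q * ρ * r < 1)
    (hmeas : ∀ n, μ.real (s (n + 1)) ≤ q * μ.real (s n))
    (hg₀ : 0 ≤ᵐ[μ.restrict (s 0)] g) (hgi : IntegrableOn g (s 0) μ)
    (havg : ∀ n, ⨍ x in s (n + 1), g x ∂μ ≤ ρ * ⨍ x in s n, g x ∂μ)
    (hf : ∀ n, f =ᵐ[μ.restrict (s n \ s (n + 1))] fun x => r ^ n * g x) (j : ℕ) :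
    IntegrableOn f (s j) μ ∧ 0 ≤ ⨍ x in s j, f x ∂μ ∧
      ⨍ x in s j, f x ∂μ ≤ (1 - q * ρ * r)⁻¹ * (ρ * r) ^ j * ⨍ x in s 0, g x ∂μ := by
  have hfin' (n : ℕ) : μ (s n) ≠ ⊤ := measure_ne_top_of_subset (hs n.zero_le) hfin
  have havg_nonneg (n : ℕ) : 0 ≤ ⨍ x in s n, g x ∂μ :=
    setAverage_nonneg_of_setIntegral_nonneg <|
      integral_nonneg_of_ae (ae_restrict_of_ae_restrict_of_subset (hs n.zero_le) hg₀)
  have hdecay (n : ℕ) : ∫ x in s (n + 1), g x ∂μ ≤ q * ρ * ∫ x in s n, g x ∂μ :=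
    setIntegral_le_of_setAverage_le (hfin' n) (hfin' (n + 1)) (havg_nonneg n) hρ (hmeas n) (havg n)
  obtain ⟨hfi, hf_nonneg, hf_le⟩ := setIntegral_tail_le_of_geometric_decay hs hsm
    (measure_iInter_eq_zero_of_measureReal_succ_le hq₀ hq₁ hfin' hmeas) hg₀ hgi
    (mul_nonneg hq₀ hρ) hr hqρr hdecay hf j
  refine ⟨hfi, setAverage_nonneg_of_setIntegral_nonneg hf_nonneg, ?_⟩
  have _ : 0 ≤ (1 - q * ρ * r)⁻¹ := inv_nonneg.2 (sub_nonneg.2 hqρr.le)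
  calc ⨍ x in s j, f x ∂μ
      = (μ.real (s j))⁻¹ * ∫ x in s j, f x ∂μ := setAverage_eq μ f (s j)
    _ ≤ (μ.real (s j))⁻¹ * ((1 - q * ρ * r)⁻¹ * (r ^ j * ∫ x in s j, g x ∂μ)) := by gcongr
    _ = (1 - q * ρ * r)⁻¹ * r ^ j * ⨍ x in s j, g x ∂μ := by
        rw [setAverage_eq, smul_eq_mul]; ring
    _ ≤ (1 - q * ρ * r)⁻¹ * r ^ j * (ρ ^ j * ⨍ x in s 0, g x ∂μ) := by
        gcongr
        exact le_geom (u := fun n => ⨍ x in s n, g x ∂μ) hρ j fun k _ => havg k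
    _ = (1 - q * ρ * r)⁻¹ * (ρ * r) ^ j * ⨍ x in s 0, g x ∂μ := by rw [mul_pow]; ring

end GeometricDecay

lemma setAverage_Ioc_eq_one_div_mul {a b : ℝ} (hab : a ≤ b) (f : ℝ → ℝ) :
    ⨍ x in Ioc a b, f x = 1 / (b - a) * ∫ x in Ioc a b, f x := by
  rw [setAverage_eq, Real.volume_real_Ioc_of_le hab, smul_eq_mul, one_div]

theorem stmt19_general {t : ℕ → ℝ} {T q ρ r : ℝ} {g lam : ℝ → ℝ}
    (hq₁ : q < 1) (hρ : 0 ≤ ρ) (hr : 0 ≤ r) (hρr : ρ * r < 1)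
    (htT : ∀ k, t k < T) (hgap : ∀ k, T - t (k + 1) ≤ q * (T - t k))
    (hg₀ : ∀ s ∈ Ioo (t 0) T, 0 ≤ g s) (hgi : IntegrableOn g (Ioo (t 0) T))
    (havg : ∀ k, 1 / (T - t (k + 1)) * ∫ s in Ioc (t (k + 1)) T, g s ≤
      ρ * (1 / (T - t k) * ∫ s in Ioc (t k) T, g s))
    (hlam : ∀ k, ∀ s ∈ Ico (t k) (t (k + 1)), lam s = r ^ k) :
    IntegrableOn (fun s => lam s * g s) (Ioc (t 0) T) ∧
      (∀ j, 1 / (T - t j) * ∫ s in Ioc (t j) T, lam s * g s ≤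
        (1 - q * ρ * r)⁻¹ * (ρ * r) ^ j * (1 / (T - t 0) * ∫ s in Ioc (t 0) T, g s)) ∧
      Tendsto (fun j => 1 / (T - t j) * ∫ s in Ioc (t j) T, lam s * g s) atTop (𝓝 0) := by
  have hq₀ : 0 ≤ q :=
    nonneg_of_mul_nonneg_left ((sub_pos.2 (htT 1)).le.trans (hgap 0)) (sub_pos.2 (htT 0))
  have ht : Monotone t := monotone_nat_of_le_succ fun k => by
    have := mul_le_of_le_one_left (sub_nonneg.2 (htT k).le) hq₁.le
    linarith [hgap k]
  simp only [← setAverage_Ioc_eq_one_div_mul (htT _).le] at havg ⊢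
  have hsdiff (k : ℕ) : Ioc (t k) T \ Ioc (t (k + 1)) T = Ioc (t k) (t (k + 1)) := by
    have := htT (k + 1)
    grind
  have hshell (k : ℕ) : (fun s => lam s * g s)
      =ᵐ[volume.restrict (Ioc (t k) T \ Ioc (t (k + 1)) T)] fun s => r ^ k * g s := by
    rw [hsdiff, ← restrict_Ioo_eq_restrict_Ioc]
    filter_upwards [ae_restrict_mem measurableSet_Ioo] with s hs
    rw [hlam k s (Ioo_subset_Ico_self hs)]
  have hg_nonneg : 0 ≤ᵐ[volume.restrict (Ioc (t 0) T)] g := by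
    rw [← restrict_Ioo_eq_restrict_Ioc]
    exact ae_restrict_of_forall_mem measurableSet_Ioo hg₀
  have hqρr : q * ρ * r < 1 := by
    rw [mul_assoc]
    exact mul_lt_one_of_nonneg_of_lt_one_left hq₀ hq₁ hρr.le
  have hmain := setAverage_le_of_geometric_decay (s := fun k => Ioc (t k) T)
    (fun _ _ hkl => Ioc_subset_Ioc_left (ht hkl)) (fun _ => measurableSet_Ioc) (by simp)
    hq₀ hq₁ hρ hr hqρr (by simpa only [Real.volume_real_Ioc_of_le (htT _).le] using hgap)
    hg_nonneg ((integrableOn_Ioc_iff_integrableOn_Ioo).2 hgi) havg hshell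
  refine ⟨(hmain 0).1, fun j => (hmain j).2.2,
    squeeze_zero (fun j => (hmain j).2.1) (fun j => (hmain j).2.2) ?_⟩
  simpa only [mul_zero, zero_mul] using
    ((tendsto_pow_atTop_nhds_zero_of_lt_one (by positivity) hρr).const_mul _).mul_const _

/-- geometric decay of the weighted tail averages. -/
theorem stmt19 :
    ∃ C > (0:ℝ), ∀ (t : ℕ → ℝ) (g lam : ℝ → ℝ),
      StrictMono t →
      (∀ k, t k ∈ Set.Ioo (0:ℝ) 1) →
      (∀ k, 1 - t (k + 1) ≤ (1 - t k) / 4) →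
      (∀ s ∈ Set.Ioo (0:ℝ) 1, 0 ≤ g s) →
      IntegrableOn g (Set.Ioo 0 1) →
      (∀ k, (1 / (1 - t (k + 1))) * ∫ s in Set.Ioc (t (k + 1)) 1, g s ≤
        (1 / (4 * (1 - t k))) * ∫ s in Set.Ioc (t k) 1, g s) →
      (∀ k, ∀ s ∈ Set.Ico (t k) (t (k + 1)), lam s = 2 ^ k) →
      (∀ j, (1 / (1 - t j)) * ∫ s in Set.Ioc (t j) 1, lam s * g s ≤
        C * (1 / 2) ^ j * ((1 / (1 - t 0)) * ∫ s in Set.Ioc (t 0) 1, g s)) ∧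
      Tendsto (fun j => (1 / (1 - t j)) * ∫ s in Set.Ioc (t j) 1, lam s * g s)
        atTop (nhds 0) := by
  refine ⟨(1 - 1 / 4 * (1 / 4) * 2)⁻¹, by norm_num, fun t g lam _ ht hgap hg hgi havg hlam => ?_⟩
  simpa only [show (1 / 4 * 2 : ℝ) = 1 / 2 by norm_num] using
    (stmt19_general (q := 1 / 4) (ρ := 1 / 4) (by norm_num) (by norm_num) zero_le_two
      (by norm_num) (fun k => (ht k).2) (fun k => by linarith [hgap k])
      (fun s hs => hg s ⟨(ht 0).1.trans hs.1, hs.2⟩)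
      (hgi.mono_set (Ioo_subset_Ioo_left (ht 0).1.le))
      (fun k => by simpa only [one_div, mul_inv, mul_assoc] using havg k) hlam).2
end
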